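/- Let (X,d,μ) be a doubling metric measure space and let f ∈ BMO(X). Suppose there exists α ≥ 0 such that the distribution function d_{f,μ}(λ) = μ({x ∈ X : |f(x)| > λ}) is finite for all λ > α. Then there exists M ≥ 0 such that ∫_{{x ∈ X : |f(x)| > λ}} |f| dμ ≤ (λ + M) · μ({x ∈ X : |f(x)| > λ}) for all λ > α; in particular f belongs to weak L^∞(X). -/

import Mathlib

open MeasureTheory Metric Set ENNReal NNReal

/-- The distribution function `d_{f,μ}(λ) = μ {x : λ < |f x|}`. -/
noncomputable def distrib {X : Type*} [MeasurableSpace X] (μ : Measure X) (f : X → ℝ)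
    (l : ℝ) : ℝ≥0∞ :=
  μ {x | l < |f x|}

/-- The decreasing rearrangement `f*(t) = inf {λ : d_{f,μ}(λ) ≤ t}` (with `inf ∅ = ∞`). -/
noncomputable def rearr {X : Type*} [MeasurableSpace X] (μ : Measure X) (f : X → ℝ)
    (t : ℝ) : ℝ≥0∞ :=
  sInf {l : ℝ≥0∞ | μ {x | l < ENNReal.ofReal |f x|} ≤ ENNReal.ofReal t}

/-- The maximal function `f**(t) = (1/t) ∫₀ᵗ f*(s) ds`. -/
noncomputable def maxfn {X : Type*} [MeasurableSpace X] (μ : Measure X) (f : X → ℝ)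
    (t : ℝ) : ℝ≥0∞ :=
  (∫⁻ s in Set.Ioc (0 : ℝ) t, rearr μ f s) / ENNReal.ofReal t

/-- The mean value `f_B = ⨍_B f dμ` of `f` over a set `B`. -/
noncomputable def meanOn {X : Type*} [MeasurableSpace X] (μ : Measure X) (f : X → ℝ)
    (B : Set X) : ℝ :=
  ⨍ y in B, f y ∂μ

/-!
A Calderón–Zygmund stopping-time argument. Let `E = {|f| > l}`, of finite measure. If
`2 μ(E) < μ(X)`, almost every point of `E` is the centre of a ball, of radius maximal up to a factor
`2`, in which `E` has density more than `1 / 2`. By the Vitali covering lemma, disjoint balls of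
this kind can be chosen whose `8`-fold dilates cover almost all of any given bounded part of `E`.
In a dilate, `|f| ≤ l` on at least half of the measure, so `|f_B| - l` is at most twice the mean
oscillation and the excess `∫ (|f| - l)⁺` is at most `3K` times the measure of the dilate; doubling
and the density of `E` in the small ball turn this into `6 K C³ μ(E)` after summation. If
`2 μ(E) ≥ μ(X)`, then `μ` is finite, so `X` is bounded, `f` is integrable, and the excess is at most
`∫ |f| ≤ 2 (⨍ |f|) μ(E)`.

The functions `|f|` and `f*` are equimeasurable, hence the bound `∫ (|f| - l)⁺ ≤ M μ(|f| > l)` at a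
level `l` slightly above `f*(t)`, where `μ(|f| > l) ≤ t`, bounds `f**(t) - f*(t)`.
-/

section BallMeasure

variable {X : Type*} [PseudoMetricSpace X] [MeasurableSpace X] {μ : Measure X} {x₀ : X}

theorem sigmaFinite_of_measure_ball_lt_top (h : ∀ r : ℝ, μ (ball x₀ r) < ⊤) : SigmaFinite μ :=
  ⟨⟨⟨fun n : ℕ => ball x₀ n, fun _ => trivial, fun n => h n, iUnion_ball_nat x₀⟩⟩⟩

theorem isOpenPosMeasure_of_measure_ball_pos
    (h : ∀ (x : X) (r : ℝ), 0 < r → 0 < μ (ball x r)) : μ.IsOpenPosMeasure := by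
  refine ⟨fun U hU ⟨x, hx⟩ => ?_⟩
  obtain ⟨r, hr, hsub⟩ := isOpen_iff.1 hU x hx
  exact ((h x r hr).trans_le (measure_mono hsub)).ne'

variable (μ) in
theorem secondCountableTopology_of_isOpenPosMeasure [OpensMeasurableSpace X] [SigmaFinite μ]
    [μ.IsOpenPosMeasure] : SecondCountableTopology X := by
  refine Metric.secondCountable_of_almost_dense_set fun ε hε => ?_
  obtain ⟨u, -, hdisj, hcov⟩ := Vitali.exists_disjoint_subfamily_covering_enlargement_closedBall
    (univ : Set X) id (fun _ => ε / 4) (ε / 4) (fun _ _ => le_rfl) 4 (by norm_num)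
  have hpos : {i : u | 0 < μ (closedBall (i : X) (ε / 4))} = univ :=
    eq_univ_of_forall fun i => measure_closedBall_pos μ i (by positivity)
  have hcount := Measure.countable_meas_pos_of_disjoint_iUnion (μ := μ)
    (fun i : u => measurableSet_closedBall (x := (i : X)) (ε := ε / 4))
    ((pairwise_subtype_iff_pairwise_set u _).2 hdisj)
  rw [hpos, countable_univ_iff] at hcount
  refine ⟨u, countable_coe_iff.1 hcount, fun x => ?_⟩
  obtain ⟨b, hb, hsub⟩ := hcov x (mem_univ x)
  have hx : dist x b ≤ 4 * (ε / 4) := hsub (mem_closedBall_self (by positivity))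
  exact ⟨b, hb, by linarith⟩

theorem exists_lt_measure_ball (x₀ : X) {a : ℝ≥0∞} (ha : a < μ univ) :
    ∃ R : ℝ, 0 < R ∧ a < μ (ball x₀ R) := by
  have hmono : Monotone fun n : ℕ => ball x₀ (n : ℝ) := fun _ _ hij =>
    ball_subset_ball (by exact_mod_cast hij)
  rw [← iUnion_ball_nat x₀, hmono.measure_iUnion, lt_iSup_iff] at ha
  obtain ⟨n, hn⟩ := ha
  have hball : ball x₀ (n : ℝ) ⊆ ball x₀ (n + 1) := ball_subset_ball (by linarith)
  exact ⟨n + 1, by positivity, hn.trans_le (measure_mono hball)⟩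

theorem setLIntegral_le_of_forall_inter_ball (x₀ : X) {E : Set X} {g : X → ℝ≥0∞} {a : ℝ≥0∞}
    (h : ∀ n : ℕ, ∫⁻ x in E ∩ ball x₀ n, g x ∂μ ≤ a) : ∫⁻ x in E, g x ∂μ ≤ a := by
  have hmono : Monotone fun n : ℕ => E ∩ ball x₀ (n : ℝ) := fun _ _ hij =>
    inter_subset_inter_right _ (ball_subset_ball (by exact_mod_cast hij))
  calc ∫⁻ x in E, g x ∂μ = ∫⁻ x in ⋃ n : ℕ, E ∩ ball x₀ n, g x ∂μ := by
        rw [← inter_iUnion, iUnion_ball_nat, inter_univ]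
    _ = ⨆ n : ℕ, ∫⁻ x in E ∩ ball x₀ n, g x ∂μ :=
        setLIntegral_iUnion_of_directed _ hmono.directed_le
    _ ≤ a := iSup_le h

end BallMeasure

section Doubling

variable {X : Type*} [PseudoMetricSpace X] [MeasurableSpace X] {μ : Measure X} {C : ℝ≥0}

/-- `μ` is doubling with constant `C` at every scale, tested on open balls. Mathlib's
`IsUnifLocDoublingMeasure` only controls small closed balls. -/
def IsDoublingWith (μ : Measure X) (C : ℝ≥0) : Prop :=
  ∀ (x : X) (r : ℝ), 0 < r → μ (ball x (2 * r)) ≤ C * μ (ball x r)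

namespace IsDoublingWith

theorem measure_ball_two_pow_mul_le (h : IsDoublingWith μ C) (x : X) {r : ℝ} (hr : 0 < r) (n : ℕ) :
    μ (ball x (2 ^ n * r)) ≤ C ^ n * μ (ball x r) := by
  induction n with
  | zero => simp
  | succ n ih =>
    calc μ (ball x (2 ^ (n + 1) * r)) = μ (ball x (2 * (2 ^ n * r))) := by ring_nf
      _ ≤ C * μ (ball x (2 ^ n * r)) := h x _ (by positivity)
      _ ≤ C * (C ^ n * μ (ball x r)) := by gcongr
      _ = C ^ (n + 1) * μ (ball x r) := by ring

theorem isUnifLocDoublingMeasure (h : IsDoublingWith μ C) : IsUnifLocDoublingMeasure μ := by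
  refine ⟨⟨C ^ 2, ?_⟩⟩
  filter_upwards [self_mem_nhdsWithin] with ε (hε : 0 < ε) x
  calc μ (closedBall x (2 * ε)) ≤ μ (ball x (2 ^ 2 * ε)) :=
        measure_mono (closedBall_subset_ball (by linarith))
    _ ≤ C ^ 2 * μ (ball x ε) := h.measure_ball_two_pow_mul_le x hε 2
    _ ≤ (C ^ 2 : ℝ≥0) * μ (closedBall x ε) := by
        push_cast
        gcongr
        exact ball_subset_closedBall

theorem measure_ball_lt_top [IsLocallyFiniteMeasure μ] (h : IsDoublingWith μ C) (x : X) (r : ℝ) :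
    μ (ball x r) < ⊤ := by
  obtain ⟨ε, hε, hfin⟩ :=
    (μ.finiteAt_nhds x).exists_mem_basis nhds_basis_ball
  obtain ⟨n, hn⟩ := pow_unbounded_of_one_lt (r / ε) one_lt_two
  rw [div_lt_iff₀ hε] at hn
  calc μ (ball x r) ≤ μ (ball x (2 ^ n * ε)) := measure_mono (ball_subset_ball hn.le)
    _ ≤ C ^ n * μ (ball x ε) := h.measure_ball_two_pow_mul_le x hε n
    _ < ⊤ := ENNReal.mul_lt_top (by finiteness) hfin

theorem secondCountableTopology [OpensMeasurableSpace X] [IsLocallyFiniteMeasure μ]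
    [μ.IsOpenPosMeasure] (h : IsDoublingWith μ C) : SecondCountableTopology X := by
  rcases isEmpty_or_nonempty X with _ | ⟨⟨x₀⟩⟩
  · infer_instance
  have := sigmaFinite_of_measure_ball_lt_top (h.measure_ball_lt_top x₀)
  exact secondCountableTopology_of_isOpenPosMeasure μ

-- The half-radius ball around a far point `x` is disjoint from `ball x₀ R`, yet by doubling it
-- carries at least the fraction `C⁻²` of the measure of `ball x₀ R`.
theorem mul_measure_ball_le_of_two_mul_le_dist [OpensMeasurableSpace X] (h : IsDoublingWith μ C)
    {x x₀ : X} {R : ℝ} (hR : 0 < R) (hx : 2 * R ≤ dist x x₀) :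
    (C ^ 2 + 1) * μ (ball x₀ R) ≤ C ^ 2 * μ univ := by
  set B := ball x (dist x x₀ / 2)
  have hdisj : Disjoint (ball x₀ R) B :=
    ball_disjoint_ball (by rw [dist_comm x₀ x]; linarith)
  have hsub : ball x₀ R ⊆ ball x (2 ^ 2 * (dist x x₀ / 2)) :=
    ball_subset_ball' (by rw [dist_comm x₀ x]; linarith)
  have hle : μ (ball x₀ R) ≤ C ^ 2 * μ B :=
    (measure_mono hsub).trans (h.measure_ball_two_pow_mul_le x (by linarith) 2)
  calc (C ^ 2 + 1) * μ (ball x₀ R) = C ^ 2 * μ (ball x₀ R) + μ (ball x₀ R) := by ring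
    _ ≤ C ^ 2 * μ (ball x₀ R) + C ^ 2 * μ B := by gcongr
    _ = C ^ 2 * μ (ball x₀ R ∪ B) := by rw [measure_union hdisj measurableSet_ball, mul_add]
    _ ≤ C ^ 2 * μ univ := by gcongr; exact subset_univ _

theorem boundedSpace [OpensMeasurableSpace X] [μ.IsOpenPosMeasure] [IsFiniteMeasure μ]
    (h : IsDoublingWith μ C) : BoundedSpace X := by
  rcases isEmpty_or_nonempty X with _ | ⟨⟨x₀⟩⟩
  · infer_instance
  have hlt : C ^ 2 * μ univ < (C ^ 2 + 1) * μ univ := by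
    rw [add_mul, one_mul]
    exact ENNReal.lt_add_right (by finiteness) (isOpen_univ.measure_ne_zero μ ⟨x₀, mem_univ x₀⟩)
  obtain ⟨R, hR, hlarge⟩ := exists_lt_measure_ball x₀
    ((ENNReal.div_lt_iff (by simp) (by simp)).2 (hlt.trans_eq (mul_comm _ _)))
  rw [ENNReal.div_lt_iff (by simp) (by simp)] at hlarge
  refine ⟨isBounded_iff_subset_ball x₀ |>.2 ⟨2 * R, fun x _ => ?_⟩⟩
  by_contra hx
  rw [mem_ball, not_lt] at hx
  have := h.mul_measure_ball_le_of_two_mul_le_dist hR hx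
  exact (hlarge.trans_eq (mul_comm _ _)).not_ge this

end IsDoublingWith

end Doubling

section Covering

theorem exists_mem_forall_two_mul_le_notMem {S : Set ℝ} (hne : S.Nonempty) (hbdd : BddAbove S)
    (hpos : ∀ r ∈ S, 0 < r) : ∃ r ∈ S, ∀ s, 2 * r ≤ s → s ∉ S := by
  obtain ⟨r₀, hr₀⟩ := hne
  have hsup : 0 < sSup S := (hpos r₀ hr₀).trans_le (le_csSup hbdd hr₀)
  obtain ⟨r, hr, hlt⟩ := exists_lt_of_lt_csSup ⟨r₀, hr₀⟩ (half_lt_self hsup)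
  refine ⟨r, hr, fun s hs hmem => ?_⟩
  have := le_csSup hbdd hmem
  linarith

theorem setLIntegral_le_mul_measure_of_ae_cover {α ι : Type*} [MeasurableSpace α] {μ : Measure α}
    {u : Set ι} (hu : u.Countable) {B B' : ι → Set α} (hB : ∀ i, MeasurableSet (B i))
    (hdisj : u.PairwiseDisjoint B) {E T : Set α} (hT : T ≤ᵐ[μ] ⋃ i ∈ u, B' i)
    {g : α → ℝ≥0∞} {A : ℝ≥0∞} (h : ∀ i ∈ u, ∫⁻ x in B' i, g x ∂μ ≤ A * μ (E ∩ B i)) :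
    ∫⁻ x in T, g x ∂μ ≤ A * μ E := by
  have := hu.to_subtype
  rw [biUnion_eq_iUnion] at hT
  calc ∫⁻ x in T, g x ∂μ ≤ ∫⁻ x in ⋃ i : u, B' i, g x ∂μ :=
        lintegral_mono' (Measure.restrict_mono' hT le_rfl) le_rfl
    _ ≤ ∑' i : u, ∫⁻ x in B' i, g x ∂μ := lintegral_iUnion_le _ _
    _ ≤ ∑' i : u, A * μ.restrict E (B i) := by
        refine ENNReal.tsum_le_tsum fun i => (h i i.2).trans_eq ?_
        rw [Measure.restrict_apply (hB i), inter_comm]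
    _ = A * ∑' i : u, μ.restrict E (B i) := ENNReal.tsum_mul_left
    _ ≤ A * μ.restrict E univ := by
        gcongr
        exact tsum_measure_le_measure_univ (fun i => (hB i).nullMeasurableSet)
          fun i j hij => (hdisj i.2 j.2 (Subtype.coe_ne_coe.2 hij)).aedisjoint
    _ = A * μ E := by rw [Measure.restrict_apply_univ]

variable {X : Type*} [PseudoMetricSpace X] [MeasurableSpace X] {μ : Measure X} {E : Set X} {x : X}

/-- The radii at which `E` has density more than `1 / 2` around `x`; a near-maximal such radius is
where the stopping-time argument stops. The measure of the open ball is compared with that of `E`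
in the closed ball, so that membership follows from density in closed balls, while
non-membership bounds the density in open balls. -/
def denseRadii (μ : Measure X) (E : Set X) (x : X) : Set ℝ :=
  {r | 0 < r ∧ μ (ball x r) < 2 * μ (E ∩ closedBall x r)}

theorem two_mul_measure_inter_ball_le_of_notMem_denseRadii {r : ℝ} (hr : 0 < r)
    (h : r ∉ denseRadii μ E x) : 2 * μ (E ∩ ball x r) ≤ μ (ball x r) := by
  have hle : 2 * μ (E ∩ closedBall x r) ≤ μ (ball x r) := not_lt.1 fun hlt => h ⟨hr, hlt⟩
  refine le_trans ?_ hle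
  gcongr
  exact ball_subset_closedBall

theorem le_add_dist_of_mem_denseRadii {x₀ : X} {R : ℝ} (hR : 2 * μ E < μ (ball x₀ R)) {r : ℝ}
    (hr : r ∈ denseRadii μ E x) : r ≤ R + dist x x₀ := by
  by_contra! hlt
  have hsub : ball x₀ R ⊆ ball x r := ball_subset_ball' (by rw [dist_comm]; exact hlt.le)
  have : 2 * μ E < 2 * μ E := calc
    2 * μ E < μ (ball x₀ R) := hR
    _ ≤ μ (ball x r) := measure_mono hsub
    _ ≤ 2 * μ (E ∩ closedBall x r) := hr.2.le
    _ ≤ 2 * μ E := by gcongr; exact inter_subset_left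
  exact this.false

variable [BorelSpace X] [SecondCountableTopology X] [IsLocallyFiniteMeasure μ]
  [IsUnifLocDoublingMeasure μ]

variable (μ E) in
theorem ae_nonempty_denseRadii : ∀ᵐ x ∂μ.restrict E, (denseRadii μ E x).Nonempty := by
  filter_upwards [IsUnifLocDoublingMeasure.ae_tendsto_measure_inter_div μ E 0] with x hx
  have hdens := hx (fun _ => x) id Filter.tendsto_id (by simp)
  have hhalf : (2 : ℝ≥0∞)⁻¹ < 1 := by simp
  obtain ⟨r, hr, hr₀ : 0 < r⟩ :=
    ((hdens.eventually (lt_mem_nhds hhalf)).and self_mem_nhdsWithin).exists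
  refine ⟨r, hr₀, (measure_mono ball_subset_closedBall).trans_lt ?_⟩
  have hlt := ENNReal.mul_lt_of_lt_div hr
  rwa [mul_comm, ← div_eq_mul_inv, ENNReal.div_lt_iff (by simp) (by simp), mul_comm] at hlt

theorem exists_disjoint_covering_of_denseRadii (hE : 2 * μ E < μ univ) {T : Set X}
    (hT : Bornology.IsBounded T) :
    ∃ (u : Set X) (ρ : X → ℝ), u.Countable ∧ u.PairwiseDisjoint (fun x => closedBall x (ρ x)) ∧
      (∀ x ∈ u, ρ x ∈ denseRadii μ E x ∧ 8 * ρ x ∉ denseRadii μ E x) ∧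
      (E ∩ T : Set X) ≤ᵐ[μ] (⋃ x ∈ u, ball x (8 * ρ x) : Set X) := by
  obtain ⟨x₀, -⟩ := nonempty_of_measure_ne_zero hE.ne_bot
  obtain ⟨R, -, hR⟩ := exists_lt_measure_ball x₀ hE
  obtain ⟨N, hN⟩ := (isBounded_iff_subset_ball x₀).1 hT
  have hbound : ∀ x, ∀ r ∈ denseRadii μ E x, r ≤ R + dist x x₀ := fun x r hr =>
    le_add_dist_of_mem_denseRadii hR hr
  have hradius : ∀ x, ∃ r, (denseRadii μ E x).Nonempty →
      r ∈ denseRadii μ E x ∧ ∀ s, 2 * r ≤ s → s ∉ denseRadii μ E x := fun x => by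
    by_cases hne : (denseRadii μ E x).Nonempty
    · obtain ⟨r, hr⟩ := exists_mem_forall_two_mul_le_notMem hne ⟨_, hbound x⟩ fun r hr => hr.1
      exact ⟨r, fun _ => hr⟩
    · exact ⟨0, fun h => absurd h hne⟩
  choose ρ hρ using hradius
  let t : Set X := {x ∈ T | (denseRadii μ E x).Nonempty}
  obtain ⟨u, hut, hdisj, hcov⟩ :=
    Vitali.exists_disjoint_subfamily_covering_enlargement_closedBall t id ρ (R + N)
      (fun x hx => (hbound x _ (hρ x hx.2).1).trans
        (by gcongr; exact (mem_ball.1 (hN hx.1)).le)) 4 (by norm_num)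
  have hpos : ∀ x ∈ t, 0 < ρ x := fun x hx => (hρ x hx.2).1.1
  refine ⟨u, ρ, ?_, hdisj, fun x hx => ?_, ?_⟩
  · exact (hdisj.mono fun x => ball_subset_closedBall).countable_of_isOpen
      (fun _ _ => isOpen_ball) fun x hx => ⟨x, mem_ball_self (hpos x (hut hx))⟩
  · obtain ⟨hmem, hmax⟩ := hρ x (hut hx).2
    exact ⟨hmem, hmax _ (by linarith [hmem.1])⟩
  · filter_upwards [ae_imp_of_ae_restrict (ae_nonempty_denseRadii μ E)] with x hx ⟨hxE, hxT⟩
    obtain ⟨b, hb, hsub⟩ := hcov x ⟨hxT, hx hxE⟩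
    have hlt : 4 * ρ b < 8 * ρ b := by linarith [hpos b (hut hb)]
    exact mem_biUnion hb
      (closedBall_subset_ball hlt (hsub (mem_closedBall_self (hpos x ⟨hxT, hx hxE⟩).le)))

end Covering

section MeanOscillation

section Set

variable {α : Type*} [MeasurableSpace α] {μ : Measure α} {f : α → ℝ} {B : Set α}

theorem setLIntegral_ofReal_abs_sub_meanOn_le {K : ℝ} (hB : μ B ≠ ⊤) (hf : IntegrableOn f B μ)
    (hK : ⨍ x in B, |f x - meanOn μ f B| ∂μ ≤ K) :
    ∫⁻ x in B, ENNReal.ofReal |f x - meanOn μ f B| ∂μ ≤ ENNReal.ofReal K * μ B := by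
  have hint : IntegrableOn (fun x => |f x - meanOn μ f B|) B μ :=
    (hf.sub (integrableOn_const hB)).abs
  rw [← measure_mul_setLAverage _ hB, setLAverage_eq,
    ← ofReal_setAverage hint (ae_of_all _ fun _ => abs_nonneg _), mul_comm]
  gcongr

theorem ofReal_sub_mul_measure_sdiff_le (hf : AEMeasurable f (μ.restrict B)) (c l : ℝ) :
    ENNReal.ofReal (|c| - l) * μ (B \ {x | l < |f x|}) ≤
      ∫⁻ x in B, ENNReal.ofReal |f x - c| ∂μ := by
  have hsub : B \ {x | l < |f x|} ⊆
      {x | ENNReal.ofReal (|c| - l) ≤ ENNReal.ofReal |f x - c|} ∩ B := by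
    rintro x ⟨hxB, hx⟩
    have hfx : |f x| ≤ l := not_lt.1 hx
    have htri : |c| - |f x| ≤ |f x - c| := abs_sub_comm c (f x) ▸ abs_sub_abs_le_abs_sub c (f x)
    exact ⟨ENNReal.ofReal_le_ofReal (by linarith), hxB⟩
  calc ENNReal.ofReal (|c| - l) * μ (B \ {x | l < |f x|})
      ≤ ENNReal.ofReal (|c| - l) *
          μ.restrict B {x | ENNReal.ofReal (|c| - l) ≤ ENNReal.ofReal |f x - c|} := by
        exact mul_le_mul_right ((measure_mono hsub).trans (Measure.le_restrict_apply B _)) _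
    _ ≤ ∫⁻ x in B, ENNReal.ofReal |f x - c| ∂μ := mul_meas_ge_le_lintegral₀ (by fun_prop) _

theorem measure_le_two_mul_measure_sdiff {E : Set α} (hB : μ B ≠ ⊤)
    (h : 2 * μ (E ∩ B) ≤ μ B) : μ B ≤ 2 * μ (B \ E) := by
  have hsplit : μ B ≤ μ (E ∩ B) + μ (B \ E) := inter_comm B E ▸ measure_le_inter_add_sdiff μ B E
  have hE : μ (E ∩ B) ≤ μ (B \ E) := by
    rw [two_mul] at h
    exact (ENNReal.add_le_add_iff_left (measure_ne_top_of_subset inter_subset_right hB)).1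
      (h.trans hsplit)
  rw [two_mul]
  exact hsplit.trans (by gcongr)

-- Half of `B` lies in `{|f| ≤ l}`, and there `|c| - l ≤ |f - c|`: the oscillation about `c`
-- controls `|c| - l` as well as `|f| - |c|`.
theorem setLIntegral_ofReal_abs_sub_le (hf : AEMeasurable f (μ.restrict B)) (hB : μ B ≠ ⊤)
    (c : ℝ) {l : ℝ} (h : 2 * μ ({x | l < |f x|} ∩ B) ≤ μ B) :
    ∫⁻ x in B, ENNReal.ofReal (|f x| - l) ∂μ ≤ 3 * ∫⁻ x in B, ENNReal.ofReal |f x - c| ∂μ := by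
  calc ∫⁻ x in B, ENNReal.ofReal (|f x| - l) ∂μ
      ≤ ∫⁻ x in B, (ENNReal.ofReal (|c| - l) + ENNReal.ofReal |f x - c|) ∂μ := by
        refine lintegral_mono fun x => le_trans (ENNReal.ofReal_le_ofReal ?_) ENNReal.ofReal_add_le
        linarith [abs_sub_abs_le_abs_sub (f x) c]
    _ = ENNReal.ofReal (|c| - l) * μ B + ∫⁻ x in B, ENNReal.ofReal |f x - c| ∂μ := by
        rw [lintegral_add_left measurable_const, setLIntegral_const]
    _ ≤ ENNReal.ofReal (|c| - l) * (2 * μ (B \ {x | l < |f x|})) +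
          ∫⁻ x in B, ENNReal.ofReal |f x - c| ∂μ := by
        gcongr
        exact measure_le_two_mul_measure_sdiff hB h
    _ = 2 * (ENNReal.ofReal (|c| - l) * μ (B \ {x | l < |f x|})) +
          ∫⁻ x in B, ENNReal.ofReal |f x - c| ∂μ := by ring
    _ ≤ 2 * ∫⁻ x in B, ENNReal.ofReal |f x - c| ∂μ + ∫⁻ x in B, ENNReal.ofReal |f x - c| ∂μ := by
        gcongr
        exact ofReal_sub_mul_measure_sdiff_le hf c l
    _ = 3 * ∫⁻ x in B, ENNReal.ofReal |f x - c| ∂μ := by ring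

theorem lintegral_ofReal_abs_sub_le_of_measure_univ_le [IsFiniteMeasure μ] {l : ℝ} (hl : 0 ≤ l)
    (h : μ univ ≤ 2 * distrib μ f l) :
    ∫⁻ x, ENNReal.ofReal (|f x| - l) ∂μ ≤
      2 * (⨍⁻ x, ENNReal.ofReal |f x| ∂μ) * distrib μ f l := by
  calc ∫⁻ x, ENNReal.ofReal (|f x| - l) ∂μ ≤ ∫⁻ x, ENNReal.ofReal |f x| ∂μ :=
        lintegral_mono fun x => ENNReal.ofReal_le_ofReal (by linarith)
    _ = μ univ * ⨍⁻ x, ENNReal.ofReal |f x| ∂μ := (measure_mul_laverage μ _).symm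
    _ ≤ 2 * distrib μ f l * ⨍⁻ x, ENNReal.ofReal |f x| ∂μ := by gcongr
    _ = 2 * (⨍⁻ x, ENNReal.ofReal |f x| ∂μ) * distrib μ f l := by ring

end Set

variable {X : Type*} [PseudoMetricSpace X] [MeasurableSpace X] {μ : Measure X} {f : X → ℝ}
  {K l : ℝ}

/-- `f` is integrable on balls and `‖f‖_* ≤ K`, i.e. `K` bounds its mean oscillation over every
ball. Integrability is required separately because Bochner averages of non-integrable functions
are `0`. -/
structure BMOWith (μ : Measure X) (f : X → ℝ) (K : ℝ) : Prop where
  integrableOn_ball : ∀ (x : X) (r : ℝ), 0 < r → IntegrableOn f (ball x r) μ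
  average_le : ∀ (x : X) (r : ℝ), 0 < r →
    ⨍ y in ball x r, |f y - meanOn μ f (ball x r)| ∂μ ≤ K

namespace BMOWith

theorem aemeasurable [SecondCountableTopology X] (hf : BMOWith μ f K) : AEMeasurable f μ := by
  have hloc : LocallyIntegrable f μ := fun x =>
    ⟨ball x 1, ball_mem_nhds x one_pos, hf.integrableOn_ball x 1 one_pos⟩
  exact hloc.aestronglyMeasurable.aemeasurable

theorem integrable [BoundedSpace X] (hf : BMOWith μ f K) : Integrable f μ := by
  rcases isEmpty_or_nonempty X with _ | ⟨⟨x₀⟩⟩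
  · exact Integrable.of_finite
  obtain ⟨R, hR, hsub⟩ := (Bornology.IsBounded.all (univ : Set X)).subset_ball_lt 0 x₀
  exact integrableOn_univ.1 ((hf.integrableOn_ball x₀ R hR).mono_set hsub)

theorem setLIntegral_ball_le (hf : BMOWith μ f K) {x : X} {r : ℝ} (hr : 0 < r)
    (hfin : μ (ball x r) ≠ ⊤) (h : 2 * μ ({x | l < |f x|} ∩ ball x r) ≤ μ (ball x r)) :
    ∫⁻ y in ball x r, ENNReal.ofReal (|f y| - l) ∂μ ≤ 3 * ENNReal.ofReal K * μ (ball x r) := by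
  have hint := hf.integrableOn_ball x r hr
  calc ∫⁻ y in ball x r, ENNReal.ofReal (|f y| - l) ∂μ
      ≤ 3 * ∫⁻ y in ball x r, ENNReal.ofReal |f y - meanOn μ f (ball x r)| ∂μ :=
        setLIntegral_ofReal_abs_sub_le hint.aemeasurable hfin _ h
    _ ≤ 3 * (ENNReal.ofReal K * μ (ball x r)) := by
        gcongr
        exact setLIntegral_ofReal_abs_sub_meanOn_le hfin hint (hf.average_le x r hr)
    _ = 3 * ENNReal.ofReal K * μ (ball x r) := by ring

variable {C : ℝ≥0} [IsLocallyFiniteMeasure μ]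

theorem setLIntegral_ball_eight_mul_le (hf : BMOWith μ f K) (hμ : IsDoublingWith μ C) {x : X}
    {r : ℝ} (hr : r ∈ denseRadii μ {x | l < |f x|} x)
    (hr8 : 8 * r ∉ denseRadii μ {x | l < |f x|} x) :
    ∫⁻ y in ball x (8 * r), ENNReal.ofReal (|f y| - l) ∂μ ≤
      6 * ENNReal.ofReal K * C ^ 3 * μ ({x | l < |f x|} ∩ closedBall x r) := by
  have hpos : 0 < 8 * r := by linarith [hr.1]
  have hdoub : μ (ball x (8 * r)) ≤ C ^ 3 * μ (ball x r) := by
    convert hμ.measure_ball_two_pow_mul_le x hr.1 3 using 4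
    norm_num
  calc ∫⁻ y in ball x (8 * r), ENNReal.ofReal (|f y| - l) ∂μ
      ≤ 3 * ENNReal.ofReal K * μ (ball x (8 * r)) :=
        hf.setLIntegral_ball_le hpos (hμ.measure_ball_lt_top x _).ne
          (two_mul_measure_inter_ball_le_of_notMem_denseRadii hpos hr8)
    _ ≤ 3 * ENNReal.ofReal K * (C ^ 3 * (2 * μ ({x | l < |f x|} ∩ closedBall x r))) := by
        gcongr
        exact hdoub.trans (by gcongr; exact hr.2.le)
    _ = 6 * ENNReal.ofReal K * C ^ 3 * μ ({x | l < |f x|} ∩ closedBall x r) := by ring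

theorem lintegral_ofReal_abs_sub_le [BorelSpace X] [SecondCountableTopology X]
    (hf : BMOWith μ f K) (hμ : IsDoublingWith μ C) (hl : 2 * distrib μ f l < μ univ) :
    ∫⁻ x, ENNReal.ofReal (|f x| - l) ∂μ ≤ 6 * ENNReal.ofReal K * C ^ 3 * distrib μ f l := by
  have := hμ.isUnifLocDoublingMeasure
  obtain ⟨x₀, -⟩ := nonempty_of_measure_ne_zero hl.ne_bot
  have hsupp : (fun x => ENNReal.ofReal (|f x| - l)).support ⊆ {x | l < |f x|} := fun x hx => by
    simpa using hx
  rw [← setLIntegral_eq_of_support_subset hsupp]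
  refine setLIntegral_le_of_forall_inter_ball x₀ fun n => ?_
  obtain ⟨u, ρ, hu, hdisj, hρ, hcov⟩ :=
    exists_disjoint_covering_of_denseRadii hl (isBounded_ball (x := x₀) (r := n))
  exact setLIntegral_le_mul_measure_of_ae_cover hu (fun _ => measurableSet_closedBall) hdisj hcov
    fun x hx => hf.setLIntegral_ball_eight_mul_le hμ (hρ x hx).1 (hρ x hx).2

theorem exists_forall_lintegral_ofReal_abs_sub_le [BorelSpace X] [μ.IsOpenPosMeasure]
    (hf : BMOWith μ f K) (hμ : IsDoublingWith μ C) :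
    ∃ M : ℝ≥0, ∀ l : ℝ, 0 ≤ l → distrib μ f l ≠ ⊤ →
      ∫⁻ x, ENNReal.ofReal (|f x| - l) ∂μ ≤ M * distrib μ f l := by
  have := hμ.secondCountableTopology
  set A : ℝ≥0∞ := 6 * ENNReal.ofReal K * C ^ 3
  have hA : A ≠ ⊤ := by finiteness
  have hsmall : ∀ l, 2 * distrib μ f l < μ univ →
      ∫⁻ x, ENNReal.ofReal (|f x| - l) ∂μ ≤ A * distrib μ f l := fun l hl =>
    hf.lintegral_ofReal_abs_sub_le hμ hl
  by_cases htop : μ univ = ⊤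
  · refine ⟨A.toNNReal, fun l _ hfin => ?_⟩
    rw [ENNReal.coe_toNNReal hA]
    refine hsmall l ?_
    rw [htop]
    finiteness
  have : IsFiniteMeasure μ := ⟨lt_top_iff_ne_top.2 htop⟩
  have := hμ.boundedSpace
  have hm : ⨍⁻ x, ENNReal.ofReal |f x| ∂μ ≠ ⊤ := hf.integrable.to_average.abs.lintegral_lt_top.ne
  set m := ⨍⁻ x, ENNReal.ofReal |f x| ∂μ
  have hD : A + 2 * m ≠ ⊤ := by finiteness
  refine ⟨(A + 2 * m).toNNReal, fun l hl _ => ?_⟩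
  rw [ENNReal.coe_toNNReal hD, add_mul]
  rcases lt_or_ge (2 * distrib μ f l) (μ univ) with hlt | hge
  · exact (hsmall l hlt).trans le_self_add
  · exact (lintegral_ofReal_abs_sub_le_of_measure_univ_le hl hge).trans le_add_self

end BMOWith

end MeanOscillation

section Rearrangement

variable {α : Type*} [MeasurableSpace α] {μ : Measure α} {f : α → ℝ}

theorem tendsto_distrib_atTop (hf : AEMeasurable f μ) (hfin : ∃ l, distrib μ f l ≠ ⊤) :
    Filter.Tendsto (distrib μ f) Filter.atTop (nhds 0) := by
  have hempty : ⋂ l : ℝ, {x | l < |f x|} = ∅ :=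
    eq_empty_of_forall_notMem fun x hx => lt_irrefl |f x| (mem_iInter.1 hx |f x|)
  rw [← measure_empty (μ := μ), ← hempty]
  exact tendsto_measure_iInter_atTop
    (fun l => nullMeasurableSet_lt aemeasurable_const (by fun_prop))
    (fun _ _ hab _ hx => lt_of_le_of_lt hab hx) hfin

theorem rearr_le_ofReal {t l : ℝ} (hl : 0 ≤ l) (h : distrib μ f l ≤ ENNReal.ofReal t) :
    rearr μ f t ≤ ENNReal.ofReal l :=
  sInf_le ((measure_mono fun _ hx => (ENNReal.ofReal_lt_ofReal_iff_of_nonneg hl).1 hx).trans h)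

theorem distrib_le_ofReal {t l : ℝ} (hl : 0 ≤ l) (h : rearr μ f t < ENNReal.ofReal l) :
    distrib μ f l ≤ ENNReal.ofReal t := by
  obtain ⟨a, ha, hal⟩ := sInf_lt_iff.1 h
  exact (measure_mono fun x hx =>
    hal.trans ((ENNReal.ofReal_lt_ofReal_iff_of_nonneg hl).2 hx)).trans ha

theorem rearr_ne_top (hf : AEMeasurable f μ) (hfin : ∃ l, distrib μ f l ≠ ⊤) {t : ℝ} (ht : 0 < t) :
    rearr μ f t ≠ ⊤ := by
  obtain ⟨l, hlt, hl⟩ := (((tendsto_distrib_atTop hf hfin).eventually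
    (gt_mem_nhds (ENNReal.ofReal_pos.2 ht))).and (Filter.eventually_ge_atTop 0)).exists
  exact ne_top_of_le_ne_top ENNReal.ofReal_ne_top (rearr_le_ofReal hl hlt.le)

theorem antitone_rearr : Antitone (rearr μ f) := fun _ _ hab =>
  sInf_le_sInf fun _ hc => le_trans hc (ENNReal.ofReal_le_ofReal hab)

theorem volume_setOf_lt_rearr_le {l : ℝ} (hl : 0 ≤ l) :
    volume {t : ℝ | 0 < t ∧ ENNReal.ofReal l < rearr μ f t} ≤ distrib μ f l := by
  by_cases htop : distrib μ f l = ⊤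
  · exact htop ▸ le_top
  have hsub : {t : ℝ | 0 < t ∧ ENNReal.ofReal l < rearr μ f t} ⊆
      Ioo 0 (distrib μ f l).toReal := by
    rintro t ⟨ht, hlt⟩
    refine ⟨ht, ?_⟩
    by_contra! hle
    exact hlt.not_ge (rearr_le_ofReal hl ((ENNReal.le_ofReal_iff_toReal_le htop ht.le).2 hle))
  calc volume {t : ℝ | 0 < t ∧ ENNReal.ofReal l < rearr μ f t}
      ≤ volume (Ioo 0 (distrib μ f l).toReal) := measure_mono hsub
    _ = distrib μ f l := by rw [Real.volume_Ioo, sub_zero, ENNReal.ofReal_toReal htop]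

theorem lintegral_rearr_tsub_le (hf : AEMeasurable f μ)
    (hfin : ∀ t : ℝ, 0 < t → rearr μ f t ≠ ⊤) {l : ℝ} (hl : 0 ≤ l) :
    ∫⁻ t in Ioi (0 : ℝ), (rearr μ f t - ENNReal.ofReal l) ≤
      ∫⁻ x, ENNReal.ofReal (|f x| - l) ∂μ := by
  have hmeas : Measurable (rearr μ f) := antitone_rearr.measurable
  have hlevel : ∀ v > 0,
      (volume.restrict (Ioi 0)) {t | v < (rearr μ f t - ENNReal.ofReal l).toReal} ≤
        μ {x | v < (|f x| - l)⁺} := fun v hv => by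
    have hdistrib : μ {x | v < (|f x| - l)⁺} = distrib μ f (l + v) := by
      simp only [distrib, posPart_def, lt_sup_iff, hv.not_gt, or_false, lt_sub_iff_add_lt']
    rw [hdistrib, Measure.restrict_apply (measurableSet_lt measurable_const (by fun_prop))]
    refine (measure_mono ?_).trans (volume_setOf_lt_rearr_le (add_nonneg hl hv.le))
    rintro t ⟨hvt, ht⟩
    refine ⟨ht, ?_⟩
    rw [ENNReal.ofReal_add hl hv.le]
    exact lt_tsub_iff_left.1 (ENNReal.ofReal_lt_iff_lt_toReal hv.le
      (ENNReal.sub_ne_top (hfin t ht)) |>.2 hvt)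
  calc ∫⁻ t in Ioi (0 : ℝ), (rearr μ f t - ENNReal.ofReal l)
      = ∫⁻ t in Ioi (0 : ℝ), ENNReal.ofReal (rearr μ f t - ENNReal.ofReal l).toReal :=
        setLIntegral_congr_fun measurableSet_Ioi fun t ht =>
          (ENNReal.ofReal_toReal (ENNReal.sub_ne_top (hfin t ht))).symm
    _ = ∫⁻ v in Ioi (0 : ℝ),
          (volume.restrict (Ioi 0)) {t | v < (rearr μ f t - ENNReal.ofReal l).toReal} :=
        lintegral_eq_lintegral_meas_lt _ (ae_of_all _ fun _ => ENNReal.toReal_nonneg) (by fun_prop)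
    _ ≤ ∫⁻ v in Ioi (0 : ℝ), μ {x | v < (|f x| - l)⁺} := setLIntegral_mono' measurableSet_Ioi hlevel
    _ = ∫⁻ x, ENNReal.ofReal (|f x| - l)⁺ ∂μ :=
        (lintegral_eq_lintegral_meas_lt _ (ae_of_all _ fun _ => posPart_nonneg _)
          (by simp only [posPart_def]; fun_prop)).symm
    _ = ∫⁻ x, ENNReal.ofReal (|f x| - l) ∂μ := by simp [posPart_def]

theorem maxfn_le_of_distrib_le (hf : AEMeasurable f μ) (hfin : ∀ t : ℝ, 0 < t → rearr μ f t ≠ ⊤)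
    {M : ℝ≥0∞} {l t : ℝ} (hl : 0 ≤ l) (hlt : distrib μ f l ≤ ENNReal.ofReal t)
    (h : ∫⁻ x, ENNReal.ofReal (|f x| - l) ∂μ ≤ M * distrib μ f l) :
    maxfn μ f t ≤ ENNReal.ofReal l + M := by
  refine ENNReal.div_le_of_le_mul ?_
  calc ∫⁻ s in Ioc (0 : ℝ) t, rearr μ f s
      ≤ ∫⁻ s in Ioc (0 : ℝ) t, (ENNReal.ofReal l + (rearr μ f s - ENNReal.ofReal l)) :=
        lintegral_mono fun _ => le_add_tsub
    _ = ENNReal.ofReal l * ENNReal.ofReal t +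
          ∫⁻ s in Ioc (0 : ℝ) t, (rearr μ f s - ENNReal.ofReal l) := by
        rw [lintegral_add_left measurable_const, setLIntegral_const, Real.volume_Ioc, sub_zero]
    _ ≤ ENNReal.ofReal l * ENNReal.ofReal t +
          ∫⁻ s in Ioi (0 : ℝ), (rearr μ f s - ENNReal.ofReal l) := by
        gcongr
        exact Ioc_subset_Ioi_self
    _ ≤ ENNReal.ofReal l * ENNReal.ofReal t + M * ENNReal.ofReal t := by
        gcongr
        exact (lintegral_rearr_tsub_le hf hfin hl).trans (h.trans (by gcongr))
    _ = (ENNReal.ofReal l + M) * ENNReal.ofReal t := (add_mul _ _ _).symm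

theorem maxfn_tsub_rearr_le (hf : AEMeasurable f μ) (hfin : ∀ t : ℝ, 0 < t → rearr μ f t ≠ ⊤)
    {M : ℝ≥0∞} {α : ℝ} (hα : 0 ≤ α)
    (h : ∀ l, α < l → ∫⁻ x, ENNReal.ofReal (|f x| - l) ∂μ ≤ M * distrib μ f l) {t : ℝ}
    (ht : 0 < t) : maxfn μ f t - rearr μ f t ≤ ENNReal.ofReal (α + 1) + M := by
  set q := (rearr μ f t).toReal
  have hq : rearr μ f t = ENNReal.ofReal q := (ENNReal.ofReal_toReal (hfin t ht)).symm
  have hq₀ : 0 ≤ q := ENNReal.toReal_nonneg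
  have hl : 0 < q + (α + 1) := by positivity
  have hlt : distrib μ f (q + (α + 1)) ≤ ENNReal.ofReal t :=
    distrib_le_ofReal hl.le (hq ▸ (ENNReal.ofReal_lt_ofReal_iff hl).2 (by linarith))
  rw [tsub_le_iff_left, hq, ← add_assoc, ← ENNReal.ofReal_add hq₀ (by positivity)]
  exact maxfn_le_of_distrib_le hf hfin hl.le hlt (h _ (by linarith))

theorem setLIntegral_ofReal_abs_le (l : ℝ) :
    ∫⁻ x in {x | l < |f x|}, ENNReal.ofReal |f x| ∂μ ≤
      ENNReal.ofReal l * distrib μ f l + ∫⁻ x, ENNReal.ofReal (|f x| - l) ∂μ := by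
  calc ∫⁻ x in {x | l < |f x|}, ENNReal.ofReal |f x| ∂μ
      ≤ ∫⁻ x in {x | l < |f x|}, (ENNReal.ofReal l + ENNReal.ofReal (|f x| - l)) ∂μ :=
        lintegral_mono fun x => le_trans (ENNReal.ofReal_le_ofReal (by linarith))
          ENNReal.ofReal_add_le
    _ = ENNReal.ofReal l * distrib μ f l +
          ∫⁻ x in {x | l < |f x|}, ENNReal.ofReal (|f x| - l) ∂μ := by
        rw [lintegral_add_left measurable_const, setLIntegral_const, distrib]
    _ ≤ ENNReal.ofReal l * distrib μ f l + ∫⁻ x, ENNReal.ofReal (|f x| - l) ∂μ := by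
        gcongr
        exact Measure.restrict_le_self

end Rearrangement

theorem stmt15_general {X : Type*} [PseudoMetricSpace X] [MeasurableSpace X] [BorelSpace X]
    (μ : Measure X)
    (hball : ∀ (x : X) (r : ℝ), 0 < r → 0 < μ (ball x r) ∧ μ (ball x r) < ⊤)
    (C : ℝ≥0)
    (hdoub : ∀ (x : X) (r : ℝ), 0 < r → μ (ball x (2 * r)) ≤ (C : ℝ≥0∞) * μ (ball x r))
    (f : X → ℝ)
    (hloc : ∀ (x : X) (r : ℝ), 0 < r → IntegrableOn f (ball x r) μ)
    (K : ℝ)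
    (hBMO : ∀ (x : X) (r : ℝ), 0 < r →
      (⨍ y in ball x r, |f y - meanOn μ f (ball x r)| ∂μ) ≤ K)
    (α : ℝ) (hα : 0 ≤ α)
    (hdist : ∀ l : ℝ, α < l → distrib μ f l < ⊤) :
    (∃ M : ℝ, 0 ≤ M ∧ ∀ l : ℝ, α < l →
      ∫⁻ x in {x | l < |f x|}, ENNReal.ofReal |f x| ∂μ ≤
        ENNReal.ofReal (l + M) * distrib μ f l) ∧
    (∀ t : ℝ, 0 < t → rearr μ f t ≠ ⊤) ∧
    (∃ M' : ℝ, 0 ≤ M' ∧ ∀ t : ℝ, 0 < t →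
      maxfn μ f t - rearr μ f t ≤ ENNReal.ofReal M') := by
  have hμ : IsDoublingWith μ C := hdoub
  have hf : BMOWith μ f K := ⟨hloc, hBMO⟩
  have : IsLocallyFiniteMeasure μ :=
    ⟨fun x => ⟨ball x 1, ball_mem_nhds x one_pos, (hball x 1 one_pos).2⟩⟩
  have := isOpenPosMeasure_of_measure_ball_pos fun x r hr => (hball x r hr).1
  have := hμ.secondCountableTopology
  obtain ⟨M, hM⟩ := hf.exists_forall_lintegral_ofReal_abs_sub_le hμ
  have hexcess : ∀ l, α < l → ∫⁻ x, ENNReal.ofReal (|f x| - l) ∂μ ≤ M * distrib μ f l :=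
    fun l hl => hM l (hα.trans hl.le) (hdist l hl).ne
  have hrearr : ∀ t : ℝ, 0 < t → rearr μ f t ≠ ⊤ := fun t =>
    rearr_ne_top hf.aemeasurable ⟨α + 1, (hdist _ (lt_add_one α)).ne⟩
  refine ⟨⟨M, M.coe_nonneg, fun l hl => ?_⟩, hrearr, α + 1 + M, by positivity, fun t ht => ?_⟩
  · rw [ENNReal.ofReal_add (hα.trans hl.le) M.coe_nonneg, ENNReal.ofReal_coe_nnreal, add_mul]
    exact (setLIntegral_ofReal_abs_le l).trans (by gcongr; exact hexcess l hl)
  · rw [ENNReal.ofReal_add (by positivity) M.coe_nonneg, ENNReal.ofReal_coe_nnreal]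
    exact maxfn_tsub_rearr_le hf.aemeasurable hrearr hα hexcess ht

/-- in a doubling metric measure space, if `f ∈ BMO(X)` and `d_{f,μ}(λ) < ∞`
for all `λ > α`, then there is `M ≥ 0` with
`∫_{{|f| > λ}} |f| dμ ≤ (λ + M) μ({|f| > λ})` for all `λ > α`; in particular `f` belongs
to weak `L^∞(X)`. -/
theorem stmt15 {X : Type*} [MetricSpace X] [MeasurableSpace X] [BorelSpace X]
    (μ : Measure X)
    (hball : ∀ (x : X) (r : ℝ), 0 < r → 0 < μ (ball x r) ∧ μ (ball x r) < ⊤)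
    (C : ℝ≥0) (hC : 1 ≤ C)
    (hdoub : ∀ (x : X) (r : ℝ), 0 < r → μ (ball x (2 * r)) ≤ (C : ℝ≥0∞) * μ (ball x r))
    (f : X → ℝ) (hf : Measurable f)
    (hloc : ∀ (x : X) (r : ℝ), 0 < r → IntegrableOn f (ball x r) μ)
    (K : ℝ)
    (hBMO : ∀ (x : X) (r : ℝ), 0 < r →
      (⨍ y in ball x r, |f y - meanOn μ f (ball x r)| ∂μ) ≤ K)
    (α : ℝ) (hα : 0 ≤ α)
    (hdist : ∀ l : ℝ, α < l → distrib μ f l < ⊤) :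
    (∃ M : ℝ, 0 ≤ M ∧ ∀ l : ℝ, α < l →
      ∫⁻ x in {x | l < |f x|}, ENNReal.ofReal |f x| ∂μ ≤
        ENNReal.ofReal (l + M) * distrib μ f l) ∧
    (∀ t : ℝ, 0 < t → rearr μ f t ≠ ⊤) ∧
    (∃ M' : ℝ, 0 ≤ M' ∧ ∀ t : ℝ, 0 < t →
      maxfn μ f t - rearr μ f t ≤ ENNReal.ofReal M') :=
  stmt15_general μ hball C hdoub f hloc K hBMO α hα hdist
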